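/- Let Π be a group, C the category of Π-sets, G a finite group with a strict right action on C by equivalences, and D' the associated descent category. Then D' has small coproducts, the forgetful functor D' → C preserves them, and every object of D' is isomorphic to a coproduct of connected objects of D' (an object is connected if it is not initial and, whenever it is isomorphic to a coproduct T₁ ⊔ T₂ in D', one of T₁, T₂ is initial). -/

import Mathlib

/-!
The forgetful functor from the descent category to `Π`-sets creates colimits: each `g^*` is an
equivalence, hence preserves colimits, so the isomorphisms `ψ_g` pass to a colimit of the
underlying `Π`-sets, and the cocycle condition can be tested on its components (`colimitObj`,
`isColimitOfForget`). This gives coproducts and their preservation.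

For the decomposition of an object `T` with underlying `Π`-set `S`, each `g` acts on the lattice of
sub-`Π`-sets of `S` by transporting `g^*A ⊆ g^*S` along `ψ_g`; since `g^*` is an equivalence this
is a lattice automorphism (`pullIso`). The sub-`Π`-sets fixed by all `g`, called stable, are exactly
those that inherit a descent datum (`restrict`, `isStable_range`), and they are closed under
intersections and complements, because automorphisms of a lattice preserve both. Hence the smallest
stable sub-`Π`-sets `atom x` containing a point `x` partition `S` (`atom_eq_of_mem`), so `T` is
their coproduct. Each is connected: in a decomposition into two summands, the one whose image
contains `x` has stable image, hence is everything, and the other is empty.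
-/

open CategoryTheory CategoryTheory.Limits

universe u

namespace Lepage

variable (M G : Type u) [Group M] [Group G]

/-- The category of `M`-sets, realized as the category of functors from the
one-object groupoid associated with `M` to the category of sets. -/
abbrev PiSet := SingleObj M ⥤ Type u

variable (act : G → PiSet M ⥤ PiSet M)

/-- Objects of the descent category `D'` associated with a strict right action of `G`
on the category of `Π`-sets: pairs `(S, (ψ_g))` where `ψ_g : S ≅ g^* S` satisfy the
cocycle condition `ψ_{g'g} = g^*(ψ_{g'}) ∘ ψ_g`. -/
structure DescentObj (hmul : ∀ g g' : G, act (g' * g) = act g' ⋙ act g) :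
    Type (u + 1) where
  S : PiSet M
  ψ : ∀ g : G, S ⟶ (act g).obj S
  iso : ∀ g : G, IsIso (ψ g)
  cocycle : ∀ g g' : G, ψ (g' * g) = ψ g ≫ (act g).map (ψ g') ≫
    eqToHom (by rw [hmul g g']; rfl)

variable {M G act}
variable {hmul : ∀ g g' : G, act (g' * g) = act g' ⋙ act g}

/-- Morphisms of the descent category: morphisms `φ : S ⟶ S'` of `Π`-sets commuting
with the descent data. -/
@[ext]
structure DescentHom (T T' : DescentObj M G act hmul) : Type u where
  φ : T.S ⟶ T'.S
  comm : ∀ g : G, φ ≫ T'.ψ g = T.ψ g ≫ (act g).map φ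

attribute [simp] DescentHom.comm

/-- The descent category `D'`. -/
instance : Category (DescentObj M G act hmul) where
  Hom := DescentHom
  id T := ⟨𝟙 T.S, fun g => by simp⟩
  comp f g := ⟨f.φ ≫ g.φ, fun h => by
    rw [Category.assoc, g.comm, ← Category.assoc, f.comm, Category.assoc,
      ← Functor.map_comp]⟩

@[simp] lemma id_φ (T : DescentObj M G act hmul) : DescentHom.φ (𝟙 T) = 𝟙 T.S := rfl

@[simp] lemma comp_φ {T T' T'' : DescentObj M G act hmul} (f : T ⟶ T') (g : T' ⟶ T'') :
    (f ≫ g).φ = f.φ ≫ g.φ := rfl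

variable (M G act hmul)

/-- The forgetful functor `F₀ : D' ⥤ C` from the descent category to the category of
`Π`-sets. -/
def forgetDescent : DescentObj M G act hmul ⥤ PiSet M where
  obj T := T.S
  map f := f.φ

/-- The forgetful functor from the category of `M`-sets to sets, i.e. evaluation at
the unique object. -/
def fiber : PiSet M ⥤ Type u := (evaluation (SingleObj M) (Type u)).obj (SingleObj.star M)

/-- The fundamental functor `F : D' ⥤ Set`, the composite of the two forgetful
functors. -/
def Fib : DescentObj M G act hmul ⥤ Type u := forgetDescent M G act hmul ⋙ fiber M


variable {M G : Type u} [Group M] [Group G] {act : G → PiSet M ⥤ PiSet M}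
variable {hmul : ∀ g g' : G, act (g' * g) = act g' ⋙ act g}

variable (M G act hmul) in
/-- A connected object of the descent category: it is not initial, and whenever it is
isomorphic to a binary coproduct, one of the two summands is initial. -/
def IsConnectedObj (T : DescentObj M G act hmul) : Prop :=
  (¬ Nonempty (IsInitial T)) ∧
    ∀ (T₁ T₂ : DescentObj M G act hmul) (c : BinaryCofan T₁ T₂),
      Nonempty (IsColimit c) → Nonempty (T ≅ c.pt) →
        Nonempty (IsInitial T₁) ∨ Nonempty (IsInitial T₂)

/-! ### Colimits in the descent category -/

/-- Naturality of the transition morphisms `eqToHom` attached to an equality of functors. -/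
lemma map_comp_eqToHom {C D : Type*} [Category C] [Category D] {F H : C ⥤ D} (h : H = F)
    {X Y : C} (f : X ⟶ Y) (hX : F.obj X = H.obj X) (hY : F.obj Y = H.obj Y) :
    F.map f ≫ eqToHom hY = eqToHom hX ≫ H.map f := by
  subst h
  simp

/-- Both sides of the cocycle condition are compatible with a morphism that commutes with the
descent data. -/
lemma cocycle_transport (hmul : ∀ g g' : G, act (g' * g) = act g' ⋙ act g)
    {X Y : PiSet M} (f : X ⟶ Y) (a : ∀ g, X ⟶ (act g).obj X)
    (b : ∀ g, Y ⟶ (act g).obj Y) (h : ∀ g, f ≫ b g = a g ≫ (act g).map f) (g g' : G)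
    (hX : (act g).obj ((act g').obj X) = (act (g' * g)).obj X)
    (hY : (act g).obj ((act g').obj Y) = (act (g' * g)).obj Y) :
    (a g ≫ (act g).map (a g') ≫ eqToHom hX) ≫ (act (g' * g)).map f =
      f ≫ b g ≫ (act g).map (b g') ≫ eqToHom hY := by
  have e := map_comp_eqToHom (F := act g' ⋙ act g) (hmul g g') f hX hY
  simp only [Functor.comp_map, Functor.comp_obj] at e
  rw [← Category.assoc f, h g, Category.assoc (a g) ((act g).map f), ← Functor.map_comp_assoc,
    h g', Functor.map_comp_assoc, e]
  simp only [Category.assoc]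

/-- A morphism `d` commutes with the descent data after precomposition with a morphism `i` as soon
as `i` and `i ≫ d` do. -/
lemma comm_desc (F : PiSet M ⥤ PiSet M) {X Y Z : PiSet M} {i : X ⟶ Y} {d : Y ⟶ Z} {s : X ⟶ Z}
    {x : X ⟶ F.obj X} {y : Y ⟶ F.obj Y} {z : Z ⟶ F.obj Z} (hi : i ≫ y = x ≫ F.map i)
    (hs : s ≫ z = x ≫ F.map s) (h : i ≫ d = s) : i ≫ d ≫ z = i ≫ y ≫ F.map d := by
  subst h
  rw [← Category.assoc i y, hi, Category.assoc, ← F.map_comp, ← hs, Category.assoc]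

section Colimits

universe v w

variable {J : Type w} [Category.{v} J] (D : J ⥤ DescentObj M G act hmul)

/-- The forgetful functor reflects colimits: the compatibility of an induced morphism with the
descent data can be tested on the components of the cocone. -/
def isColimitOfForget (c : Cocone D)
    (hc : IsColimit ((forgetDescent M G act hmul).mapCocone c)) : IsColimit c where
  desc s := ⟨hc.desc ((forgetDescent M G act hmul).mapCocone s), fun g => by
    exact hc.hom_ext fun j => comm_desc (act g) ((c.ι.app j).comm g) ((s.ι.app j).comm g)
      (hc.fac ((forgetDescent M G act hmul).mapCocone s) j)⟩
  fac s j := DescentHom.ext (hc.fac ((forgetDescent M G act hmul).mapCocone s) j)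
  uniq s m hm := DescentHom.ext (hc.uniq ((forgetDescent M G act hmul).mapCocone s) m.φ
    fun j => congrArg DescentHom.φ (hm j))

/-- The isomorphisms `ψ_g` of the objects of a diagram assemble to a natural isomorphism. -/
noncomputable def ψNatIso (g : G) :
    D ⋙ forgetDescent M G act hmul ≅ (D ⋙ forgetDescent M G act hmul) ⋙ act g :=
  NatIso.ofComponents (fun j => @asIso _ _ _ _ ((D.obj j).ψ g) ((D.obj j).iso g))
    (fun f => (D.map f).comm g)

variable [∀ g, (act g).IsEquivalence] {D}
  {c : Cocone (D ⋙ forgetDescent M G act hmul)} (hc : IsColimit c)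

/-- The isomorphism `ψ_g` on a colimit of underlying `Π`-sets; it exists because `g^*`, being an
equivalence, preserves colimits. -/
noncomputable def colimitψ (g : G) : c.pt ≅ (act g).obj c.pt :=
  IsColimit.coconePointsIsoOfNatIso hc (isColimitOfPreserves (act g) hc) (ψNatIso D g)

lemma ι_colimitψ (g : G) (j : J) :
    c.ι.app j ≫ (colimitψ hc g).hom = (D.obj j).ψ g ≫ (act g).map (c.ι.app j) :=
  IsColimit.comp_coconePointsIsoOfNatIso_hom hc (isColimitOfPreserves (act g) hc) (ψNatIso D g) j

/-- The descent datum carried by a colimit of underlying `Π`-sets. -/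
noncomputable def colimitObj : DescentObj M G act hmul where
  S := c.pt
  ψ g := (colimitψ hc g).hom
  iso g := inferInstance
  cocycle g g' := hc.hom_ext fun j => by
    refine (ι_colimitψ hc _ j).trans ?_
    rw [(D.obj j).cocycle]
    exact cocycle_transport hmul (c.ι.app j) (D.obj j).ψ
      (fun g => (colimitψ hc g).hom) (fun g => ι_colimitψ hc g j) g g' _ _

/-- The lift to the descent category of a colimit cocone of underlying `Π`-sets. -/
noncomputable def colimitCocone : Cocone D where
  pt := colimitObj hc
  ι :=
    { app j := ⟨c.ι.app j, fun g => ι_colimitψ hc g j⟩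
      naturality _ _ f := DescentHom.ext (c.ι.naturality f) }

/-- The lifted cocone has the given cocone as its image, hence is a colimit. -/
noncomputable def colimitCoconeIsColimit : IsColimit (colimitCocone hc) :=
  isColimitOfForget D _ hc

variable (M G act hmul J)

lemma hasColimitsOfShape_descent [HasColimitsOfShape J (PiSet M)] :
    HasColimitsOfShape J (DescentObj M G act hmul) :=
  ⟨fun _ => ⟨⟨_, colimitCoconeIsColimit (colimit.isColimit _)⟩⟩⟩

lemma preservesColimitsOfShape_forget [HasColimitsOfShape J (PiSet M)] :
    PreservesColimitsOfShape J (forgetDescent M G act hmul) :=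
  ⟨fun {_} => preservesColimit_of_preserves_colimit_cocone
    (colimitCoconeIsColimit (colimit.isColimit _)) (colimit.isColimit _)⟩

end Colimits

/-! ### Initial objects -/

lemma isInitial_of_isEmpty (T : DescentObj M G act hmul) [∀ X, IsEmpty (T.S.obj X)] :
    Nonempty (IsInitial T) := by
  have key : ∀ {Y : PiSet M} (f f' : T.S ⟶ Y), f = f' := fun f f' => by
    ext X x
    exact isEmptyElim x
  exact ⟨IsInitial.ofUniqueHom
    (fun Y => ⟨{ app X := TypeCat.ofHom isEmptyElim
                 naturality _ _ _ := by ext x; exact isEmptyElim x },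
      fun g => key _ _⟩) (fun Y m => DescentHom.ext (key _ _))⟩

lemma isEmpty_of_isInitial [∀ g, (act g).IsEquivalence] (T : DescentObj M G act hmul)
    (h : IsInitial T) : IsEmpty (T.S.obj (SingleObj.star M)) := by
  have := preservesColimitsOfShape_forget M G act hmul (Discrete PEmpty.{1})
  have h' : IsInitial T.S := IsInitial.isInitialObj (forgetDescent M G act hmul) T h
  exact (Types.initial_iff_empty _).1
    ⟨IsInitial.isInitialObj ((evaluation (SingleObj M) (Type u)).obj (SingleObj.star M)) _ h'⟩

/-! ### Stable subobjects -/

section Stable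

variable [∀ g, (act g).IsEquivalence] (T : DescentObj M G act hmul)

instance (g : G) : IsIso (T.ψ g) := T.iso g

/-- Inclusion of images in a monomorphism amounts to factorization through it. -/
lemma range_le_iff {X Y S : PiSet M} (f : X ⟶ S) (m : Y ⟶ S) [Mono m] :
    Subfunctor.range f ≤ Subfunctor.range m ↔ ∃ k : X ⟶ Y, k ≫ m = f := by
  constructor
  · intro h
    refine ⟨Subfunctor.lift f h ≫ inv (Subfunctor.toRange m), ?_⟩
    have e : inv (Subfunctor.toRange m) ≫ m = (Subfunctor.range m).ι := by
      rw [IsIso.inv_comp_eq, Subfunctor.toRange_ι]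
    rw [Category.assoc, e, Subfunctor.lift_ι]
  · rintro ⟨k, rfl⟩
    exact Subfunctor.range_comp_le _ _

/-- The action of `g` on sub-`Π`-sets of the underlying `Π`-set of `T`: the image of
`g^*A ⟶ g^*S` transported along `ψ_g`. -/
noncomputable def pull (g : G) (A : Subfunctor T.S) : Subfunctor T.S :=
  Subfunctor.range ((act g).map A.ι ≫ inv (T.ψ g))

lemma pull_range (g : G) {X : PiSet M} (m : X ⟶ T.S) [Mono m] :
    pull T g (Subfunctor.range m) = Subfunctor.range ((act g).map m ≫ inv (T.ψ g)) := by
  apply le_antisymm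
  · refine (range_le_iff _ _).2 ⟨(act g).map (inv (Subfunctor.toRange m)), ?_⟩
    rw [← Functor.map_comp_assoc]
    congr 2
    rw [IsIso.inv_comp_eq, Subfunctor.toRange_ι]
  · refine (range_le_iff _ _).2 ⟨(act g).map (Subfunctor.toRange m), ?_⟩
    rw [← Functor.map_comp_assoc, Subfunctor.toRange_ι]

lemma pull_le_pull_iff (g : G) (A B : Subfunctor T.S) :
    pull T g A ≤ pull T g B ↔ A ≤ B := by
  have hAB : A ≤ B ↔ Subfunctor.range A.ι ≤ Subfunctor.range B.ι := by simp
  rw [hAB, range_le_iff, pull, pull, range_le_iff]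
  constructor
  · rintro ⟨k, hk⟩
    refine ⟨(act g).preimage k, (act g).map_injective ?_⟩
    rw [← cancel_mono (inv (T.ψ g))]
    simpa using hk
  · rintro ⟨k, hk⟩
    exact ⟨(act g).map k, by rw [← Functor.map_comp_assoc, hk]⟩

lemma pull_surjective (g : G) : Function.Surjective (pull T g) := by
  intro B
  let e := (act g).objObjPreimageIso B.toFunctor
  let m : (act g).objPreimage B.toFunctor ⟶ T.S := (act g).preimage (e.hom ≫ B.ι ≫ T.ψ g)
  have hm : (act g).map m = e.hom ≫ B.ι ≫ T.ψ g := (act g).map_preimage _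
  have : Mono m := by
    have : Mono ((act g).map m) := by rw [hm]; infer_instance
    exact (act g).mono_of_mono_map this
  refine ⟨Subfunctor.range m, ?_⟩
  rw [pull_range, hm]
  simp only [Category.assoc, IsIso.hom_inv_id, Category.comp_id]
  apply le_antisymm
  · exact (Subfunctor.range_comp_le _ _).trans (by simp)
  · conv_lhs => rw [← Subfunctor.range_ι B]
    exact (range_le_iff _ _).2 ⟨e.inv, by simp⟩

/-- `pull` as an automorphism of the lattice of sub-`Π`-sets. -/
noncomputable def pullIso (g : G) : Subfunctor T.S ≃o Subfunctor T.S :=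
  RelIso.ofSurjective (OrderEmbedding.ofMapLEIff (pull T g) (pull_le_pull_iff T g))
    (pull_surjective T g)

/-- A sub-`Π`-set is stable if the descent datum restricts to it. -/
def IsStable (A : Subfunctor T.S) : Prop := ∀ g, pullIso T g A = A

lemma IsStable.sInf {s : Set (Subfunctor T.S)} (hs : ∀ A ∈ s, IsStable T A) :
    IsStable T (sInf s) := fun g => by
  rw [OrderIso.map_sInf]
  refine le_antisymm (le_sInf fun A hA => ?_) (le_iInf₂ fun A hA => ?_)
  · exact (iInf₂_le A hA).trans (hs A hA g).le
  · exact (sInf_le hA).trans (hs A hA g).ge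

/-- The set-theoretic complement of a sub-`Π`-set, which is a sub-`Π`-set as `Π` is a group. -/
def complSub {S : PiSet M} (A : Subfunctor S) : Subfunctor S where
  obj U := (A.obj U)ᶜ
  map {U V} i x hx h := hx (by
    have h' := A.map (U := V) (V := U) (Groupoid.inv i) h
    have : S.map (Groupoid.inv i) (S.map i x) = x := by
      rw [← Functor.map_comp_apply]
      simp
    simpa [this] using h')

lemma eq_complSub {S : PiSet M} {A B : Subfunctor S} (h : IsCompl A B) : B = complSub A := by
  ext U x
  have h1 := congrArg (fun A : Subfunctor S => x ∈ A.obj U) h.inf_eq_bot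
  have h2 := congrArg (fun A : Subfunctor S => x ∈ A.obj U) h.sup_eq_top
  simp at h1 h2
  change _ ↔ x ∉ A.obj U
  tauto

lemma isCompl_complSub {S : PiSet M} (A : Subfunctor S) : IsCompl A (complSub A) := by
  refine IsCompl.of_eq ?_ ?_
  · ext U x
    exact iff_of_false (fun h => h.2 h.1) id
  · ext U x
    exact iff_of_true (em _) trivial

lemma IsStable.compl {A : Subfunctor T.S} (hA : IsStable T A) : IsStable T (complSub A) :=
  fun g => by
    have h := (pullIso T g).isCompl (isCompl_complSub A)
    rw [hA g] at h
    exact eq_complSub h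

/-- The image of a monomorphism underlying a morphism of descent data is stable. -/
lemma isStable_range {T' : DescentObj M G act hmul} (f : T' ⟶ T) [Mono f.φ] :
    IsStable T (Subfunctor.range f.φ) := fun g => by
  change pull T g _ = _
  rw [pull_range]
  have h : (act g).map f.φ ≫ inv (T.ψ g) = inv (T'.ψ g) ≫ f.φ := by
    rw [IsIso.eq_inv_comp, ← Category.assoc, IsIso.comp_inv_eq, f.comm]
  rw [h]
  exact le_antisymm (Subfunctor.range_comp_le _ _) ((range_le_iff _ _).2 ⟨T'.ψ g, by simp⟩)

lemma exists_restrict {A : Subfunctor T.S} (hA : IsStable T A) (g : G) :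
    ∃ e : A.toFunctor ≅ (act g).obj A.toFunctor, e.hom ≫ (act g).map A.ι = A.ι ≫ T.ψ g := by
  have h : Subfunctor.range ((act g).map A.ι ≫ inv (T.ψ g)) = Subfunctor.range A.ι := by
    rw [Subfunctor.range_ι]; exact hA g
  obtain ⟨k, hk⟩ := (range_le_iff _ _).1 h.le
  obtain ⟨l, hl⟩ := (range_le_iff _ _).1 h.ge
  refine ⟨⟨l, k, ?_, ?_⟩, ?_⟩
  · rw [← cancel_mono A.ι, Category.assoc, hk, hl, Category.id_comp]
  · rw [← cancel_mono ((act g).map A.ι ≫ inv (T.ψ g)), Category.assoc, hl, hk, Category.id_comp]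
  · rw [← IsIso.comp_inv_eq, Category.assoc]
    exact hl

/-- The object of the descent category carried by a stable sub-`Π`-set. -/
noncomputable def restrict (A : Subfunctor T.S) (hA : IsStable T A) :
    DescentObj M G act hmul where
  S := A.toFunctor
  ψ g := (exists_restrict T hA g).choose.hom
  iso g := inferInstance
  cocycle g g' := by
    have h := fun g => (exists_restrict T hA g).choose_spec
    rw [← cancel_mono ((act (g' * g)).map A.ι), h, T.cocycle]
    exact (cocycle_transport hmul A.ι _ T.ψ (fun g => (h g).symm) g g' _ _).symm

/-- The inclusion of a stable sub-`Π`-set, as a morphism of the descent category. -/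
noncomputable def restrictι (A : Subfunctor T.S) (hA : IsStable T A) : restrict T A hA ⟶ T :=
  ⟨A.ι, fun g => (exists_restrict T hA g).choose_spec.symm⟩

/-! ### Atoms of the lattice of stable subobjects -/

/-- The smallest stable sub-`Π`-set containing the point `x`. -/
noncomputable def atom (x : T.S.obj (SingleObj.star M)) : Subfunctor T.S :=
  sInf {A | IsStable T A ∧ x ∈ A.obj (SingleObj.star M)}

variable {T}

lemma isStable_atom (x : T.S.obj (SingleObj.star M)) : IsStable T (atom T x) :=
  IsStable.sInf T fun _ hA => hA.1

lemma mem_atom (x : T.S.obj (SingleObj.star M)) : x ∈ (atom T x).obj (SingleObj.star M) := by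
  rw [atom, Subfunctor.sInf_obj]
  rintro _ ⟨A, hA, rfl⟩
  exact hA.2

lemma atom_le {x : T.S.obj (SingleObj.star M)} {A : Subfunctor T.S} (hA : IsStable T A)
    (hx : x ∈ A.obj (SingleObj.star M)) : atom T x ≤ A :=
  sInf_le ⟨hA, hx⟩

/-- Two atoms with a common point coincide: if `x ∉ atom z`, then the complement of `atom z` is a
stable subobject containing `x`, hence contains `atom x`, which excludes `z ∈ atom x`. -/
lemma atom_eq_of_mem {x z : T.S.obj (SingleObj.star M)}
    (hz : z ∈ (atom T x).obj (SingleObj.star M)) : atom T z = atom T x := by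
  refine le_antisymm (atom_le (isStable_atom x) hz) (atom_le (isStable_atom z) ?_)
  by_contra hx
  exact atom_le ((isStable_atom z).compl) hx _ hz (mem_atom z)

/-- A summand of `atom x` whose image contains `x` is everything, so that the other summand, being
disjoint from it, is empty. -/
lemma isInitial_of_mem_range (x : T.S.obj (SingleObj.star M)) {T₁ T₂ : DescentObj M G act hmul}
    (i₁ : T₁ ⟶ restrict T (atom T x) (isStable_atom x))
    (i₂ : T₂ ⟶ restrict T (atom T x) (isStable_atom x)) (hi : Mono i₁.φ)
    (hd : ∀ y₁ y₂, i₁.φ.app (SingleObj.star M) y₁ ≠ i₂.φ.app (SingleObj.star M) y₂)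
    (hx : ∃ y, i₁.φ.app (SingleObj.star M) y = ⟨x, mem_atom x⟩) :
    Nonempty (IsInitial T₂) := by
  have hm : Mono (i₁ ≫ restrictι T _ (isStable_atom x)).φ :=
    haveI : Mono (restrictι T _ (isStable_atom x)).φ := inferInstanceAs (Mono (atom T x).ι)
    mono_comp i₁.φ (restrictι T _ (isStable_atom x)).φ
  obtain ⟨y, hy⟩ := hx
  have hle : atom T x ≤ _ := atom_le (isStable_range T (i₁ ≫ restrictι T _ (isStable_atom x)))
    ⟨y, congrArg Subtype.val hy⟩
  have he : ∀ X, IsEmpty (T₂.S.obj X) := by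
    rintro ⟨⟩
    refine ⟨fun y₂ => ?_⟩
    obtain ⟨y₁, h⟩ := hle _ (i₂.φ.app (SingleObj.star M) y₂).2
    exact hd y₁ y₂ (Subtype.ext h)
  exact isInitial_of_isEmpty T₂

lemma mono_of_star_injective {X Y : PiSet M} (f : X ⟶ Y)
    (hf : Function.Injective (f.app (SingleObj.star M))) : Mono f := by
  have : ∀ Z, Mono (f.app Z) := by
    rintro ⟨⟩
    exact (mono_iff_injective _).2 hf
  exact NatTrans.mono_of_mono_app f

lemma isConnectedObj_atom (x : T.S.obj (SingleObj.star M)) :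
    IsConnectedObj M G act hmul (restrict T (atom T x) (isStable_atom x)) := by
  refine ⟨fun ⟨h⟩ => (isEmpty_of_isInitial _ h).false ⟨x, mem_atom x⟩, ?_⟩
  rintro T₁ T₂ c ⟨hc⟩ ⟨e⟩
  have := preservesColimitsOfShape_forget M G act hmul (Discrete WalkingPair)
  have : PreservesColimitsOfShape (Discrete WalkingPair) (fiber M) :=
    inferInstanceAs (PreservesColimitsOfShape _ ((evaluation _ _).obj _))
  have : PreservesColimitsOfShape (Discrete WalkingPair) (Fib M G act hmul) :=
    comp_preservesColimitsOfShape _ _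
  let c' : BinaryCofan T₁ T₂ := BinaryCofan.mk (c.inl ≫ e.inv) (c.inr ≫ e.inv)
  have hc' : IsColimit c' := hc.ofIsoColimit (BinaryCofan.ext e.symm rfl rfl)
  have h1 := mapIsColimitOfPreservesOfIsColimit (Fib M G act hmul) _ _ hc'
  obtain ⟨hl, hr, hcompl⟩ := (Types.binaryCofan_isColimit_iff _).1 ⟨h1⟩
  have hd : ∀ y₁ y₂, c'.inl.φ.app (SingleObj.star M) y₁ ≠ c'.inr.φ.app (SingleObj.star M) y₂ :=
    fun y₁ y₂ h => Set.disjoint_left.1 hcompl.disjoint ⟨y₁, rfl⟩ ⟨y₂, h.symm⟩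
  have hl' : Mono c'.inl.φ := mono_of_star_injective _ hl
  have hr' : Mono c'.inr.φ := mono_of_star_injective _ hr
  have hx : (⟨x, mem_atom x⟩ : (atom T x).obj _) ∈ _ := hcompl.codisjoint.top_le trivial
  rcases hx with hx | hx
  · exact Or.inr (isInitial_of_mem_range x c'.inl c'.inr hl' hd hx)
  · exact Or.inl (isInitial_of_mem_range x c'.inr c'.inl hr'
      (fun y₁ y₂ => (hd y₂ y₁).symm) hx)

/-- A `Π`-set is the coproduct of the members of a partition into sub-`Π`-sets. -/
lemma isColimit_of_partition {S : PiSet M} {J : Type u} (A : J → Subfunctor S)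
    (h : ∀ X (x : S.obj X), ∃ j, x ∈ (A j).obj X)
    (h' : ∀ X (x : S.obj X) j j', x ∈ (A j).obj X → x ∈ (A j').obj X → j = j') :
    Nonempty (IsColimit (Cofan.mk S fun j => (A j).ι)) := by
  choose k hk using h
  have key : ∀ {Y : PiSet M} (f : ∀ j, (A j).toFunctor ⟶ Y) X (x : S.obj X) j
      (hj : x ∈ (A j).obj X), (f (k X x)).app X ⟨x, hk X x⟩ = (f j).app X ⟨x, hj⟩ := by
    intro Y f X x j hj
    obtain rfl := h' X x _ _ (hk X x) hj
    rfl
  refine ⟨Cofan.IsColimit.mk _ (fun s =>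
    { app X := TypeCat.ofHom fun x => (s.inj (k X x)).app X ⟨x, hk X x⟩
      naturality X Y f := ?_ }) ?_ ?_⟩
  · ext x
    refine (key s.inj Y (S.map f x) (k X x) ((A _).map f (hk X x))).trans ?_
    exact NatTrans.naturality_apply (s.inj (k X x)) f ⟨x, hk X x⟩
  · intro s j
    ext X x
    exact key s.inj X x.1 j x.2
  · intro s m hm
    ext X x
    exact congrArg (fun f => f.app X ⟨x, hk X x⟩) (hm (k X x))

/-- An object is the coproduct of the atoms of its lattice of stable subobjects. -/
theorem exists_decomposition (T : DescentObj M G act hmul) :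
    ∃ (J : Type u) (f : J → DescentObj M G act hmul)
      (c : Cofan f), Nonempty (IsColimit c) ∧ (∀ j : J, IsConnectedObj M G act hmul (f j)) ∧
        Nonempty (T ≅ c.pt) := by
  let J := Set.range (atom T)
  have hJ : ∀ j : J, IsStable T j.1 := by
    rintro ⟨_, x, rfl⟩
    exact isStable_atom x
  obtain ⟨hcol⟩ := isColimit_of_partition (fun j : J => j.1)
    (by rintro ⟨⟩ x; exact ⟨⟨_, x, rfl⟩, mem_atom x⟩)
    (by
      rintro ⟨⟩ z ⟨_, x, rfl⟩ ⟨_, y, rfl⟩ hx hy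
      exact Subtype.ext ((atom_eq_of_mem hx).symm.trans (atom_eq_of_mem hy)))
  refine ⟨J, fun j => restrict T j.1 (hJ j), Cofan.mk T fun j => restrictι T j.1 (hJ j),
    ⟨isColimitOfForget _ _ ((isColimitMapCoconeCofanMkEquiv (forgetDescent M G act hmul) _ _).symm
      hcol)⟩, ?_, ⟨Iso.refl T⟩⟩
  · rintro ⟨_, x, rfl⟩
    exact isConnectedObj_atom x

end Stable

/-- STATEMENT 7: the descent category `D'` has small coproducts, the forgetful functor
`D' ⥤ C` preserves them, and every object of `D'` is a coproduct of connected
objects. -/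
theorem stmt_7 [Finite G] (hone : act 1 = 𝟭 (PiSet M))
    (hequiv : ∀ g : G, (act g).IsEquivalence) :
    HasCoproducts.{u} (DescentObj M G act hmul) ∧
    (∀ J : Type u, PreservesColimitsOfShape (Discrete J) (forgetDescent M G act hmul)) ∧
    (∀ T : DescentObj M G act hmul, ∃ (J : Type u) (f : J → DescentObj M G act hmul)
      (c : Cofan f), Nonempty (IsColimit c) ∧ (∀ j : J, IsConnectedObj M G act hmul (f j)) ∧
        Nonempty (T ≅ c.pt)) := by
  refine ⟨fun J => ?_, fun J => ?_, fun T => exists_decomposition T⟩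
  · exact hasColimitsOfShape_descent M G act hmul (Discrete J)
  · exact preservesColimitsOfShape_forget M G act hmul (Discrete J)

end Lepage
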